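/- For every n ≥ 0 and every t ∈ ℝ, the quantity τ_n(t) := L^{(t)}[x·Q_n(x;t)] satisfies τ_n(t) = σ_{n,n}(t) · Σ_{k=1}^{n+1} γ_k(t), where γ_k(t) = α_{k+1}(t) + β_k(t). -/

import Mathlib

open Polynomial

/-- The moment functional `L^{(t)}` applied to `x^m · P(x)`, where the moments are
`L^{(t)}[x^k] = ν k t`. -/
noncomputable def Lmom (ν : ℤ → ℝ → ℂ) (m : ℤ) (P : Polynomial ℂ) (t : ℝ) : ℂ :=
  P.sum fun j c => c * ν (m + (j : ℤ)) t

/-!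
Apply `L` to `x ^ m` times the recurrence. At `m = -1` orthogonality removes two of the four terms
and leaves `σ (n + 1) = α (n + 2) σ n`, where `σ n = L[Q n]`. At `m = 0` this turns the recurrence
into `τ (n + 1) = α (n + 2) τ n + (α (n + 3) + β (n + 2)) σ (n + 1)`, where `τ n = L[x Q n]`.
Formally dividing by `σ (n + 1) = α (n + 2) σ n` shows that `τ n / σ n` grows by
`α (n + 3) + β (n + 2)` at each step; no actual division is needed.
-/

section LOrthogonality

open scoped LaurentPolynomial
open LaurentPolynomial (T T_zero T_add)

variable {R M : Type*} [CommRing R] [AddCommGroup M] [Module R M]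

/-- The three-term recurrence
`P (n + 1) = (x - β (n + 1)) P n - α (n + 1) x P (n - 1)` characteristic of L-orthogonal
polynomials, for sequences of Laurent polynomials. The initial value `P 0` is arbitrary, and indices
are shifted so that no natural-number subtraction occurs. -/
structure IsLRecurrence (α β : ℕ → R) (P : ℕ → R[T;T⁻¹]) : Prop where
  one : P 1 = T 1 * P 0 - β 1 • P 0
  add_two (n : ℕ) :
    P (n + 2) = T 1 * P (n + 1) - β (n + 2) • P (n + 1) - α (n + 2) • (T 1 * P n)

namespace IsLRecurrence

variable {α β : ℕ → R} {P : ℕ → R[T;T⁻¹]}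

theorem map_T_mul_add_two (hP : IsLRecurrence α β P) (L : R[T;T⁻¹] →ₗ[R] M) (m : ℤ) (n : ℕ) :
    L (T m * P (n + 2)) =
      L (T (m + 1) * P (n + 1)) - β (n + 2) • L (T m * P (n + 1)) -
        α (n + 2) • L (T (m + 1) * P n) := by
  simp only [hP.add_two, mul_sub, mul_smul_comm, ← mul_assoc, ← T_add, map_sub, map_smul]

theorem map_add_one (hP : IsLRecurrence α β P) {L : R[T;T⁻¹] →ₗ[R] M}
    (hL : ∀ n, L (T (-1) * P (n + 1)) = 0) (n : ℕ) :
    L (P (n + 1)) = α (n + 2) • L (P n) := by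
  have h := hP.map_T_mul_add_two L (-1) n
  rw [hL n, hL (n + 1), neg_add_cancel, T_zero, one_mul, one_mul, smul_zero, sub_zero] at h
  exact sub_eq_zero.mp h.symm

theorem map_T_one_mul_zero (hP : IsLRecurrence α β P) {L : R[T;T⁻¹] →ₗ[R] M}
    (hL : ∀ n, L (T (-1) * P (n + 1)) = 0) :
    L (T 1 * P 0) = (α 2 + β 1) • L (P 0) := by
  rw [add_smul, ← hP.map_add_one hL 0, hP.one, map_sub, map_smul, sub_add_cancel]

theorem map_T_one_mul_add_one (hP : IsLRecurrence α β P) {L : R[T;T⁻¹] →ₗ[R] M}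
    (hL : ∀ n, L (T (-1) * P (n + 1)) = 0) (n : ℕ) :
    L (T 1 * P (n + 1)) =
      α (n + 2) • L (T 1 * P n) + (α (n + 3) + β (n + 2)) • L (P (n + 1)) := by
  have h := hP.map_T_mul_add_two L 0 n
  rw [T_zero, one_mul, one_mul, zero_add, hP.map_add_one hL (n + 1)] at h
  linear_combination (norm := module) -h

end IsLRecurrence

theorem stmt_5_general {α β : ℕ → R} {P : ℕ → R[T;T⁻¹]} (hP : IsLRecurrence α β P)
    {L : R[T;T⁻¹] →ₗ[R] M} (hL : ∀ n, L (T (-1) * P (n + 1)) = 0) (n : ℕ) :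
    L (T 1 * P n) = (∑ k ∈ Finset.Icc 1 (n + 1), (α (k + 1) + β k)) • L (P n) := by
  induction n with
  | zero => simpa using hP.map_T_one_mul_zero hL
  | succ n ih =>
    rw [hP.map_T_one_mul_add_one hL, ih, smul_comm, ← hP.map_add_one hL, ← add_smul,
      ← Finset.sum_Icc_succ_top (by omega)]

/-- The linear map `L` on Laurent polynomials with prescribed moments `L[x ^ k] = μ k`; it
packages the moment functional `Lmom` at a fixed time as a linear map. -/
noncomputable def momentMap (μ : ℤ → M) : R[T;T⁻¹] →ₗ[R] M :=
  Finsupp.linearCombination R μ ∘ₗ (AddMonoidAlgebra.coeffLinearEquiv R).toLinearMap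

theorem momentMap_smul_T (μ : ℤ → M) (a : R) (k : ℤ) :
    momentMap μ (a • T k : R[T;T⁻¹]) = a • μ k := by
  simp [momentMap, T, -LaurentPolynomial.single_eq_C_mul_T]

theorem Lmom_eq_momentMap (ν : ℤ → ℝ → ℂ) (m : ℤ) (P : ℂ[X]) (t : ℝ) :
    Lmom ν m P t = momentMap (fun k => ν k t) (T m * toLaurent P) := by
  induction P using Polynomial.induction_on' with
  | add P Q hP hQ =>
    rw [map_add, mul_add, map_add, ← hP, ← hQ]
    exact sum_add_index P Q _ (by simp) (by intros; ring)
  | monomial j a =>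
    rw [toLaurent_C_mul_T, ← LaurentPolynomial.smul_eq_C_mul, mul_smul_comm, ← T_add,
      momentMap_smul_T]
    exact sum_monomial_index a _ (zero_mul _)

theorem isLRecurrence_toLaurent {α β : ℕ → R} {Q : ℕ → R[X]}
    (hone : Q 1 = (X - C (β 1)) * Q 0)
    (hrec : ∀ n, 1 ≤ n → Q (n + 1) =
      (X - C (β (n + 1))) * Q n - C (α (n + 1)) * (X * Q (n - 1))) :
    IsLRecurrence α β fun n => toLaurent (Q n) where
  one := by
    simp only [hone, map_mul, map_sub, toLaurent_X, toLaurent_C, sub_mul,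
      LaurentPolynomial.smul_eq_C_mul]
  add_two n := by
    simp only [hrec (n + 1) (by omega), add_tsub_cancel_right, map_mul, map_sub, toLaurent_X,
      toLaurent_C, sub_mul, LaurentPolynomial.smul_eq_C_mul]

end LOrthogonality

theorem stmt_5 (p q : ℂ) (ν : ℤ → ℝ → ℂ)
    (hνdiff : ∀ k, Differentiable ℝ (ν k))
    (hνderiv : ∀ k t, deriv (ν k) t = -(p * ν (k + 1) t + q * ν (k - 1) t))
    (hν0 : ∀ t, ν 0 t ≠ 0)
    (Q : ℕ → ℝ → Polynomial ℂ)
    (hQ0 : ∀ t, Q 0 t = 1)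
    (hQmonic : ∀ n t, (Q n t).Monic)
    (hQdeg : ∀ n t, (Q n t).natDegree = n)
    (hQdiff : ∀ n j, Differentiable ℝ fun t => (Q n t).coeff j)
    (β α : ℕ → ℝ → ℂ)
    (hβdiff : ∀ n, Differentiable ℝ (β n))
    (hαdiff : ∀ n, Differentiable ℝ (α n))
    (hβ0 : ∀ t, β 0 t = 1) (hα0 : ∀ t, α 0 t = -1) (hα1 : ∀ t, α 1 t = 0)
    (hβne : ∀ n, 1 ≤ n → ∀ t, β n t ≠ 0)
    (hαne : ∀ n, 1 ≤ n → ∀ t, α (n + 1) t ≠ 0)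
    (horth : ∀ n : ℕ, 1 ≤ n → ∀ s < n, ∀ t : ℝ, Lmom ν (-(n : ℤ) + (s : ℤ)) (Q n t) t = 0)
    (hQ1 : ∀ t, Q 1 t = X - C (β 1 t))
    (hrec : ∀ n, 1 ≤ n → ∀ t,
      Q (n + 1) t = (X - C (β (n + 1) t)) * Q n t - C (α (n + 1) t) * (X * Q (n - 1) t)) :
    ∀ (n : ℕ) (t : ℝ),
      Lmom ν 1 (Q n t) t =
        Lmom ν 0 (Q n t) t * ∑ k ∈ Finset.Icc 1 (n + 1), (α (k + 1) t + β k t) := by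
  intro n t
  simp only [Lmom_eq_momentMap] at horth ⊢
  have hP : IsLRecurrence (α · t) (β · t) fun n => toLaurent (Q n t) :=
    isLRecurrence_toLaurent (by rw [hQ1, hQ0, mul_one]) fun n hn => hrec n hn t
  have hL (n : ℕ) :
      momentMap (fun k => ν k t) (LaurentPolynomial.T (-1) * toLaurent (Q (n + 1) t)) = 0 := by
    simpa using horth (n + 1) n.succ_pos n n.lt_succ_self t
  simpa using (stmt_5_general hP hL n).trans (mul_comm _ _)
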